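/- Let f : ℝ^d → ℝ be L-smooth, let μ > 0, and let f_μ be its Gaussian smoothing. Then for all x, x̂ ∈ ℝ^d (x̂ being a delayed iterate), ‖∇f_μ(x̂) − ∇f(x)‖² ≤ μ² L² (d + 3)³ / 2 + 2 L² ‖x̂ − x‖². -/

import Mathlib

open MeasureTheory ProbabilityTheory

/-- The standard multivariate Gaussian distribution `N(0, I_d)` on `ℝ^d`. -/
noncomputable def stdGaussian (d : ℕ) : Measure (EuclideanSpace ℝ (Fin d)) :=
  (Measure.pi fun _ : Fin d => gaussianReal 0 1).map
    (MeasurableEquiv.toLp 2 (Fin d → ℝ))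

section StdGaussian

variable {d : ℕ}

instance isProbabilityMeasure_stdGaussian_euclidean (d : ℕ) :
    IsProbabilityMeasure (_root_.stdGaussian d) :=
  Measure.isProbabilityMeasure_map (MeasurableEquiv.measurable _).aemeasurable

theorem measurePreserving_eval_stdGaussian (i : Fin d) :
    MeasurePreserving (fun u : EuclideanSpace ℝ (Fin d) => u i) (_root_.stdGaussian d)
      (gaussianReal 0 1) :=
  (measurePreserving_eval (fun _ : Fin d => gaussianReal 0 1) i).comp
    ((MeasurableEquiv.measurable (MeasurableEquiv.toLp 2 (Fin d → ℝ))).measurePreserving _ |>.symm)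

theorem integrable_sq_gaussianReal : Integrable (fun t : ℝ => t ^ 2) (gaussianReal 0 1) :=
  (memLp_id_gaussianReal 2).integrable_sq

theorem integral_sq_gaussianReal : ∫ t, t ^ 2 ∂(gaussianReal 0 1) = 1 := by
  have h := variance_id_gaussianReal (μ := 0) (v := 1)
  rw [variance_of_integral_eq_zero aemeasurable_id (by simp)] at h
  simpa using h

theorem integrable_eval_sq_stdGaussian (i : Fin d) :
    Integrable (fun u : EuclideanSpace ℝ (Fin d) => u i ^ 2) (_root_.stdGaussian d) :=
  (measurePreserving_eval_stdGaussian i).integrable_comp_of_integrable integrable_sq_gaussianReal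

theorem integrable_norm_sq_stdGaussian :
    Integrable (fun u : EuclideanSpace ℝ (Fin d) => ‖u‖ ^ 2) (_root_.stdGaussian d) := by
  simp_rw [EuclideanSpace.real_norm_sq_eq]
  exact integrable_finsetSum _ fun i _ => integrable_eval_sq_stdGaussian i

theorem integral_norm_sq_stdGaussian :
    ∫ u, ‖u‖ ^ 2 ∂(_root_.stdGaussian d) = d := by
  simp_rw [EuclideanSpace.real_norm_sq_eq]
  rw [integral_finsetSum _ fun i _ => integrable_eval_sq_stdGaussian i]
  have h (i : Fin d) : ∫ u, u i ^ 2 ∂(_root_.stdGaussian d) = 1 := by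
    have hp := measurePreserving_eval_stdGaussian i
    rw [← integral_sq_gaussianReal, ← hp.map_eq,
      integral_map hp.measurable.aemeasurable (by fun_prop)]
  simp [h]

theorem integrable_norm_stdGaussian :
    Integrable (fun u : EuclideanSpace ℝ (Fin d) => ‖u‖) (_root_.stdGaussian d) := by
  refine ((integrable_const (1 : ℝ)).add integrable_norm_sq_stdGaussian).mono'
    (by fun_prop) (.of_forall fun u => ?_)
  simp only [norm_norm, Pi.add_apply]
  nlinarith [sq_nonneg (‖u‖ - 1), norm_nonneg u]

theorem integral_norm_stdGaussian_le :
    ∫ u, ‖u‖ ∂(_root_.stdGaussian d) ≤ ((d : ℝ) + 1) / 2 := by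
  calc ∫ u, ‖u‖ ∂(_root_.stdGaussian d)
      ≤ ∫ u, (‖u‖ ^ 2 + 1) / 2 ∂(_root_.stdGaussian d) := by
        refine integral_mono integrable_norm_stdGaussian
          ((integrable_norm_sq_stdGaussian.add (integrable_const 1)).div_const 2) fun u => ?_
        dsimp only
        nlinarith [sq_nonneg (‖u‖ - 1)]
    _ = ((d : ℝ) + 1) / 2 := by
        rw [integral_div, integral_add integrable_norm_sq_stdGaussian (integrable_const 1),
          integral_norm_sq_stdGaussian]
        simp

/-- A function whose derivative is `K`-Lipschitz grows at most quadratically. -/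
theorem abs_sub_le_of_fderiv_lipschitz {E : Type*} [NormedAddCommGroup E] [NormedSpace ℝ E]
    {f : E → ℝ} {K : ℝ} (hK : 0 ≤ K) (hf : Differentiable ℝ f)
    (hlip : ∀ x y, ‖fderiv ℝ f x - fderiv ℝ f y‖ ≤ K * ‖x - y‖) (x v : E) :
    |f (x + v) - f x| ≤ (‖fderiv ℝ f x‖ + K * ‖v‖) * ‖v‖ := by
  have h := (convex_closedBall x ‖v‖).norm_image_sub_le_of_norm_fderiv_le (𝕜 := ℝ) (f := f)
    (C := ‖fderiv ℝ f x‖ + K * ‖v‖) (x := x) (y := x + v) (fun y _ => hf y)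
    (fun y hy => ?_) (by simp) (by simp)
  · simpa using h
  · have hy' : ‖y - x‖ ≤ ‖v‖ := by simpa [dist_eq_norm] using hy
    calc ‖fderiv ℝ f y‖ ≤ ‖fderiv ℝ f x‖ + ‖fderiv ℝ f y - fderiv ℝ f x‖ := norm_le_insert' _ _
      _ ≤ _ := by grw [hlip, hy']

section Smoothing

variable {f : EuclideanSpace ℝ (Fin d) → ℝ} {K μ : ℝ}

theorem integrable_comp_add_smul_stdGaussian (hK : 0 ≤ K) (hf : Differentiable ℝ f)
    (hlip : ∀ x y, ‖fderiv ℝ f x - fderiv ℝ f y‖ ≤ K * ‖x - y‖)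
    (x : EuclideanSpace ℝ (Fin d)) :
    Integrable (fun u => f (x + μ • u)) (_root_.stdGaussian d) := by
  have hc : Continuous f := hf.continuous
  refine ((integrable_const |f x|).add ((integrable_norm_stdGaussian.const_mul
    (‖fderiv ℝ f x‖ * |μ|)).add (integrable_norm_sq_stdGaussian.const_mul (K * |μ| ^ 2)))).mono'
    (by fun_prop) (.of_forall fun u => ?_)
  have h := abs_sub_le_of_fderiv_lipschitz hK hf hlip x (μ • u)
  have h' := norm_le_insert' (f (x + μ • u)) (f x)
  simp only [norm_smul, Real.norm_eq_abs, Pi.add_apply] at h h' ⊢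
  linarith

theorem continuous_fderiv_of_norm_sub_le
    (hlip : ∀ x y, ‖fderiv ℝ f x - fderiv ℝ f y‖ ≤ K * ‖x - y‖) :
    Continuous (fderiv ℝ f) :=
  (LipschitzWith.of_dist_le' fun x y => by simpa [dist_eq_norm] using hlip x y).continuous

/-- Gaussian smoothing commutes with differentiation. -/
theorem hasFDerivAt_gaussian_smoothing (hK : 0 ≤ K) (hf : Differentiable ℝ f)
    (hlip : ∀ x y, ‖fderiv ℝ f x - fderiv ℝ f y‖ ≤ K * ‖x - y‖)
    (x : EuclideanSpace ℝ (Fin d)) :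
    HasFDerivAt (fun y => ∫ u, f (y + μ • u) ∂(_root_.stdGaussian d))
      (∫ u, fderiv ℝ f (x + μ • u) ∂(_root_.stdGaussian d)) x := by
  have hc : Continuous f := hf.continuous
  have hc' := continuous_fderiv_of_norm_sub_le hlip
  refine hasFDerivAt_integral_of_dominated_of_fderiv_le
    (bound := fun u => ‖fderiv ℝ f x‖ + K * (1 + |μ| * ‖u‖))
    (F' := fun y u => fderiv ℝ f (y + μ • u))
    (Metric.ball_mem_nhds x one_pos) (.of_forall fun y => by fun_prop)
    (integrable_comp_add_smul_stdGaussian hK hf hlip x)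
    (Continuous.aestronglyMeasurable (by fun_prop))
    (.of_forall fun u y hy => ?_) ?_ (.of_forall fun u y _ => ?_)
  · have hy' : ‖y - x‖ ≤ 1 := by simpa [dist_eq_norm] using (Metric.mem_ball.1 hy).le
    calc ‖fderiv ℝ f (y + μ • u)‖
        ≤ ‖fderiv ℝ f x‖ + ‖fderiv ℝ f (y + μ • u) - fderiv ℝ f x‖ := norm_le_insert' _ _
      _ ≤ ‖fderiv ℝ f x‖ + K * ‖(y - x) + μ • u‖ := by
        grw [hlip, add_sub_right_comm]
      _ ≤ _ := by
        grw [norm_add_le, hy', norm_smul, Real.norm_eq_abs]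
  · exact (integrable_const _).add
      (((integrable_const 1).add (integrable_norm_stdGaussian.const_mul _)).const_mul _)
  · exact (hasFDerivAt_comp_add_right (μ • u)).2 (hf (y + μ • u)).hasFDerivAt

theorem norm_integral_fderiv_sub_le (hK : 0 ≤ K)
    (hlip : ∀ x y, ‖fderiv ℝ f x - fderiv ℝ f y‖ ≤ K * ‖x - y‖)
    (x y : EuclideanSpace ℝ (Fin d)) :
    ‖(∫ u, fderiv ℝ f (y + μ • u) ∂(_root_.stdGaussian d)) - fderiv ℝ f x‖
      ≤ K * (‖y - x‖ + |μ| * (((d : ℝ) + 1) / 2)) := by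
  have hc' := continuous_fderiv_of_norm_sub_le hlip
  have hbound (u : EuclideanSpace ℝ (Fin d)) :
      ‖fderiv ℝ f (y + μ • u) - fderiv ℝ f x‖ ≤ K * (‖y - x‖ + |μ| * ‖u‖) := by
    grw [hlip, add_sub_right_comm, norm_add_le, norm_smul, Real.norm_eq_abs]
  have hnorm := integrable_norm_stdGaussian (d := d)
  have hg : Integrable (fun u => K * (‖y - x‖ + |μ| * ‖u‖)) (_root_.stdGaussian d) :=
    ((integrable_const _).add (hnorm.const_mul _)).const_mul _
  have hsub : Integrable (fun u => fderiv ℝ f (y + μ • u) - fderiv ℝ f x)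
      (_root_.stdGaussian d) :=
    hg.mono' (Continuous.aestronglyMeasurable (by fun_prop)) (.of_forall hbound)
  have hint : Integrable (fun u => fderiv ℝ f (y + μ • u)) (_root_.stdGaussian d) := by
    refine (hsub.add (integrable_const (fderiv ℝ f x))).congr (.of_forall fun u => ?_)
    simp only [Pi.add_apply, sub_add_cancel]
  have heq : (∫ u, fderiv ℝ f (y + μ • u) ∂(_root_.stdGaussian d)) - fderiv ℝ f x
      = ∫ u, (fderiv ℝ f (y + μ • u) - fderiv ℝ f x) ∂(_root_.stdGaussian d) := by
    rw [integral_sub hint (integrable_const _)]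
    simp
  rw [heq]
  calc _ ≤ ∫ u, K * (‖y - x‖ + |μ| * ‖u‖) ∂(_root_.stdGaussian d) :=
        norm_integral_le_of_norm_le hg (.of_forall hbound)
    _ = K * (‖y - x‖ + |μ| * ∫ u, ‖u‖ ∂(_root_.stdGaussian d)) := by
        rw [integral_const_mul, integral_add (integrable_const _) (hnorm.const_mul _),
          integral_const_mul]
        simp
    _ ≤ _ := by grw [integral_norm_stdGaussian_le]

end Smoothing

end StdGaussian

theorem norm_gradient_sub_gradient {E : Type*} [NormedAddCommGroup E] [InnerProductSpace ℝ E]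
    [CompleteSpace E] (f g : E → ℝ) (x y : E) :
    ‖gradient f x - gradient g y‖ = ‖fderiv ℝ f x - fderiv ℝ g y‖ := by
  rw [gradient, gradient, ← map_sub, LinearIsometryEquiv.norm_map]

/-- Delayed-iterate bound for Gaussian smoothing:
`‖∇f_μ(x̂) − ∇f(x)‖² ≤ μ² L² (d + 3)³ / 2 + 2 L² ‖x̂ − x‖²`. -/
theorem gaussian_smoothing_delayed_gradient_bound
    (d : ℕ) (L μ : ℝ) (hμ : 0 < μ)
    (f : EuclideanSpace ℝ (Fin d) → ℝ)
    (hdiff : Differentiable ℝ f)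
    (hlip : ∀ x y, ‖gradient f x - gradient f y‖ ≤ L * ‖x - y‖)
    (fμ : EuclideanSpace ℝ (Fin d) → ℝ)
    (hfμ : ∀ x, fμ x = ∫ u, f (x + μ • u) ∂(stdGaussian d))
    (x xhat : EuclideanSpace ℝ (Fin d)) :
    ‖gradient fμ xhat - gradient f x‖ ^ 2
      ≤ μ ^ 2 * L ^ 2 * ((d : ℝ) + 3) ^ 3 / 2 + 2 * L ^ 2 * ‖xhat - x‖ ^ 2 := by
  have hlip' (a b) : ‖fderiv ℝ f a - fderiv ℝ f b‖ ≤ |L| * ‖a - b‖ := by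
    rw [← norm_gradient_sub_gradient]
    grw [hlip, le_abs_self L]
  have hderiv := (hasFDerivAt_gaussian_smoothing (μ := μ) (abs_nonneg L) hdiff hlip' xhat).fderiv
  rw [← funext hfμ] at hderiv
  rw [norm_gradient_sub_gradient, hderiv]
  grw [norm_integral_fderiv_sub_le (abs_nonneg L) hlip' x xhat]
  rw [mul_pow, sq_abs, abs_of_pos hμ]
  have hd : ((d : ℝ) + 1) ^ 2 ≤ ((d : ℝ) + 3) ^ 3 := by
    have : (0 : ℝ) ≤ d := d.cast_nonneg
    nlinarith [pow_nonneg this 3, sq_nonneg (d : ℝ)]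
  calc L ^ 2 * (‖xhat - x‖ + μ * (((d : ℝ) + 1) / 2)) ^ 2
      ≤ L ^ 2 * (2 * (‖xhat - x‖ ^ 2 + (μ * (((d : ℝ) + 1) / 2)) ^ 2)) := by
        grw [add_sq_le]
    _ = μ ^ 2 * L ^ 2 * ((d : ℝ) + 1) ^ 2 / 2 + 2 * L ^ 2 * ‖xhat - x‖ ^ 2 := by ring
    _ ≤ _ := by grw [hd]
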